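/- Suppose F(x) = f(x) + P₁(x) − P₂(x) is level-bounded and the function E(x, y, w) = f(x) + P₁(x) − ⟨x, y⟩ + P₂*(y) + (L/2)‖x − w‖² is a KL function. Let {x^k} be the sequence generated by pDCA_e for minimizing F. Then {x^k} converges to a stationary point of F, and moreover ∑_{k=1}^∞ ‖x^k − x^{k−1}‖ < ∞. -/

import Mathlib

/-!
By the Fenchel equality, the potential `E` at `(x^{k+1}, ξ^{k+1}, x^k)` is the objective with `P₂`
linearized at `x^k`, plus `L/2 ‖x^{k+1} - x^k‖²`. Strong convexity of the proximal subproblem and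
the bound on the extrapolation parameters make it decrease by a multiple of `‖x^{k+1} - x^k‖²` per
step, and the optimality conditions give limiting subgradients of `E` bounded by a multiple of the
last two step lengths. The `ξ^k` need not converge, so the KL inequality at a single cluster point
of these triples is not enough; but `E` is constant on their compact cluster set, hence one
desingularizing function serves a neighbourhood of the whole set, and its concavity turns the
quadratic decrease into a telescoping bound on the step lengths. The iterates therefore form a
Cauchy sequence, and closedness of the graphs of `∂P₁` and `∂P₂` makes the limit stationary.
-/

open Filter Topology Set Metric Bornology
open scoped RealInnerProductSpace

noncomputable section

abbrev Eucl (n : ℕ) := EuclideanSpace ℝ (Fin n)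

variable {H : Type*} [NormedAddCommGroup H] [InnerProductSpace ℝ H]

/-- Fréchet (regular) subgradient of an extended-real-valued function. -/
def FrechetSubgradAt (h : H → EReal) (v x : H) : Prop :=
  ∀ ε : ℝ, 0 < ε →
    ∀ᶠ y in 𝓝[≠] x, h x + ((⟪v, y - x⟫ - ε * ‖y - x‖ : ℝ) : EReal) ≤ h y

/-- Limiting (Mordukhovich) subdifferential. -/
def limSubdiff (h : H → EReal) (x : H) : Set H :=
  {v | ∃ xs vs : ℕ → H,
    Tendsto xs atTop (𝓝 x) ∧
    Tendsto (fun k => h (xs k)) atTop (𝓝 (h x)) ∧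
    Tendsto vs atTop (𝓝 v) ∧
    ∀ k, FrechetSubgradAt h (vs k) (xs k)}

/-- Convex subgradient of a real-valued function. -/
def ConvexSubgradAt (g : H → ℝ) (v x : H) : Prop :=
  ∀ y, g x + ⟪v, y - x⟫ ≤ g y

/-- Convex subgradient of an extended-real-valued function. -/
def ConvexSubgradAtE (g : H → EReal) (v x : H) : Prop :=
  ∀ y, g x + ((⟪v, y - x⟫ : ℝ) : EReal) ≤ g y

/-- Convex conjugate of a real-valued function. -/
def conjE (g : H → ℝ) (y : H) : EReal :=
  ⨆ x : H, ((⟪x, y⟫ - g x : ℝ) : EReal)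

/-- `P` is proper, closed (lsc) and convex. -/
def ProperClosedConvexE (P : H → EReal) : Prop :=
  (∀ x, P x ≠ ⊥) ∧ (∃ x, P x ≠ ⊤) ∧ LowerSemicontinuous P ∧
  (∀ x y : H, ∀ t : ℝ, t ∈ Ioo (0:ℝ) 1 →
    P (t • x + (1 - t) • y) ≤ (t : EReal) * P x + ((1 - t : ℝ) : EReal) * P y)

/-- KL property with exponent `α` at a point. -/
def KLExpAt (h : H → EReal) (α : ℝ) (x₀ : H) : Prop :=
  ∃ c > (0:ℝ), ∃ ε > (0:ℝ), ∃ a > (0:ℝ), ∀ x : H,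
    ‖x - x₀‖ ≤ ε → h x₀ < h x → h x < h x₀ + (a : EReal) →
    (limSubdiff h x).Nonempty →
    1 ≤ c * (1 - α) * ((h x).toReal - (h x₀).toReal) ^ (-α) * infDist 0 (limSubdiff h x)

/-- KL function with exponent `α`. -/
def IsKLWithExp (h : H → EReal) (α : ℝ) : Prop :=
  ∀ x₀ : H, (limSubdiff h x₀).Nonempty → KLExpAt h α x₀

/-- KL property (general desingularizing function) at a point. -/
def KLAt (h : H → EReal) (x₀ : H) : Prop :=
  ∃ a > (0:ℝ), ∃ U ∈ 𝓝 x₀, ∃ φ φd : ℝ → ℝ,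
    ContinuousOn φ (Ico 0 a) ∧ ConcaveOn ℝ (Ico 0 a) φ ∧ φ 0 = 0 ∧
    (∀ s ∈ Ico (0:ℝ) a, 0 ≤ φ s) ∧
    (∀ s ∈ Ioo (0:ℝ) a, HasDerivAt φ (φd s) s ∧ 0 < φd s) ∧
    ∀ x ∈ U, h x₀ < h x → h x < h x₀ + (a : EReal) → (limSubdiff h x).Nonempty →
      1 ≤ φd ((h x).toReal - (h x₀).toReal) * infDist 0 (limSubdiff h x)

/-- KL function. -/
def IsKLFun (h : H → EReal) : Prop :=
  ∀ x₀ : H, (limSubdiff h x₀).Nonempty → KLAt h x₀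

/-- The potential function `E(x,y,w) = f(x) + P₁(x) - ⟨x,y⟩ + P₂*(y) + L/2 ‖x-w‖²`. -/
def potE (f : H → ℝ) (P₁ : H → EReal) (P₂ : H → ℝ) (L : ℝ) (x y w : H) : EReal :=
  ((f x : ℝ) : EReal) + P₁ x - ((⟪x, y⟫ : ℝ) : EReal) + conjE P₂ y
    + ((L / 2 * ‖x - w‖ ^ 2 : ℝ) : EReal)

/-- The pDCAe iteration: `ξ^{k+1} ∈ ∂P₂(x^k)`, `u^k = x^k + β_k (x^k - x^{k-1})` and
`x^{k+1}` is the minimizer of `⟨∇f(u^k) - ξ^{k+1}, ·⟩ + L/2 ‖· - u^k‖² + P₁(·)`.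
(`x⁻¹ = x⁰` is encoded by truncated subtraction in `ℕ`.) -/
def IsPDCAe (f' : H → H) (P₁ : H → EReal) (P₂ : H → ℝ) (L : ℝ) (β : ℕ → ℝ)
    (x ξ : ℕ → H) : Prop :=
  P₁ (x 0) ≠ ⊤ ∧
  (∀ k : ℕ, ConvexSubgradAt P₂ (ξ (k + 1)) (x k)) ∧
  (∀ k : ℕ, ∀ z : H,
    ((⟪f' (x k + β k • (x k - x (k - 1))) - ξ (k + 1), x (k + 1)⟫
        + L / 2 * ‖x (k + 1) - (x k + β k • (x k - x (k - 1)))‖ ^ 2 : ℝ) : EReal)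
      + P₁ (x (k + 1))
      ≤ ((⟪f' (x k + β k • (x k - x (k - 1))) - ξ (k + 1), z⟫
        + L / 2 * ‖z - (x k + β k • (x k - x (k - 1)))‖ ^ 2 : ℝ) : EReal) + P₁ z)

/-- Triples `(x, y, w)` with the ℓ² product inner product structure. -/
abbrev Trip (n : ℕ) := WithLp 2 (Eucl n × WithLp 2 (Eucl n × Eucl n))

def mkTrip {n : ℕ} (a b c : Eucl n) : Trip n :=
  (WithLp.equiv 2 _).symm (a, (WithLp.equiv 2 _).symm (b, c))

/-- `potE` as a function on triples. -/
def potE3 {n : ℕ} (f : Eucl n → ℝ) (P₁ : Eucl n → EReal) (P₂ : Eucl n → ℝ) (L : ℝ)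
    (p : Trip n) : EReal :=
  potE f P₁ P₂ L ((WithLp.equiv 2 _) p).1 ((WithLp.equiv 2 _) ((WithLp.equiv 2 _) p).2).1
    ((WithLp.equiv 2 _) ((WithLp.equiv 2 _) p).2).2

/-! ### Smooth and convex functions -/

lemma hasDerivAt_comp_lineMap [CompleteSpace H] {f : H → ℝ} {g a b : H} {t : ℝ}
    (hf : HasGradientAt f g (AffineMap.lineMap a b t)) :
    HasDerivAt (f ∘ AffineMap.lineMap (k := ℝ) a b) ⟪g, b - a⟫ t := by
  simpa only [InnerProductSpace.toDual_apply_apply] using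
    hf.hasFDerivAt.comp_hasDerivAt t AffineMap.hasDerivAt_lineMap

lemma add_inner_gradient_le_of_convexOn [CompleteSpace H] {f : H → ℝ} {s : Set H} {g a b : H}
    (hconv : ConvexOn ℝ s f) (ha : a ∈ s) (hb : b ∈ s) (hf : HasGradientAt f g a) :
    f a + ⟪g, b - a⟫ ≤ f b := by
  have hline := hconv.comp_affineMap (AffineMap.lineMap a b : ℝ →ᵃ[ℝ] H)
  have hderiv : HasDerivAt (f ∘ AffineMap.lineMap (k := ℝ) a b) ⟪g, b - a⟫ 0 :=
    hasDerivAt_comp_lineMap (by simpa only [AffineMap.lineMap_apply_zero] using hf)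
  have hslope := hline.le_slope_of_hasDerivAt (x := 0) (y := 1) (by simpa using ha)
    (by simpa using hb) one_pos hderiv
  simp only [slope_def_field, Function.comp_apply, AffineMap.lineMap_apply_zero,
    AffineMap.lineMap_apply_one, sub_zero, div_one] at hslope
  linarith

lemma le_add_inner_gradient_add_sq [CompleteSpace H] {f : H → ℝ} {f' : H → H} {L : ℝ}
    (hf : ∀ y, HasGradientAt f (f' y) y) (hlip : ∀ y z, ‖f' y - f' z‖ ≤ L * ‖y - z‖) (a b : H) :
    f b ≤ f a + ⟪f' a, b - a⟫ + L / 2 * ‖b - a‖ ^ 2 := by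
  set ℓ := AffineMap.lineMap (k := ℝ) a b
  let gap : ℝ → ℝ := fun t => f (ℓ t) - t * ⟪f' a, b - a⟫ - L / 2 * ‖b - a‖ ^ 2 * t ^ 2
  have hgap : ∀ t, HasDerivAt gap (⟪f' (ℓ t) - f' a, b - a⟫ - L * ‖b - a‖ ^ 2 * t) t := by
    intro t
    have hlin := (hasDerivAt_id t).mul_const ⟪f' a, b - a⟫
    have hquad := (hasDerivAt_pow 2 t).const_mul (L / 2 * ‖b - a‖ ^ 2)
    refine (((hasDerivAt_comp_lineMap (hf (ℓ t))).sub hlin).sub hquad).congr_deriv ?_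
    rw [inner_sub_left]
    push_cast
    ring
  have hanti : AntitoneOn gap (Icc 0 1) := by
    refine antitoneOn_of_deriv_nonpos (convex_Icc 0 1)
      (fun t _ => (hgap t).continuousAt.continuousWithinAt)
      (fun t _ => (hgap t).differentiableAt.differentiableWithinAt) fun t ht => ?_
    rw [interior_Icc] at ht
    have hstep : ‖ℓ t - a‖ = t * ‖b - a‖ := by
      simp [ℓ, AffineMap.lineMap_apply, norm_smul, abs_of_pos ht.1]
    rw [(hgap t).deriv, sub_nonpos]
    calc ⟪f' (ℓ t) - f' a, b - a⟫ ≤ ‖f' (ℓ t) - f' a‖ * ‖b - a‖ := real_inner_le_norm _ _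
      _ ≤ L * ‖ℓ t - a‖ * ‖b - a‖ := by gcongr; exact hlip _ _
      _ = L * ‖b - a‖ ^ 2 * t := by rw [hstep]; ring
  have hends := hanti (left_mem_Icc.2 zero_le_one) (right_mem_Icc.2 zero_le_one) zero_le_one
  simp only [gap, ℓ, AffineMap.lineMap_apply_zero, AffineMap.lineMap_apply_one] at hends
  linarith

/-! ### Convex subgradients and conjugates -/

lemma ConvexSubgradAtE.add_inner_le {P : H → EReal} {v a b : H} {p q : ℝ}
    (hv : ConvexSubgradAtE P v a) (hp : P a = p) (hq : P b = q) : p + ⟪v, b - a⟫ ≤ q := by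
  have h := hv b
  rw [hp, hq] at h
  exact_mod_cast h

/-- Although `P` is only lower semicontinuous, its subgradients force its values to be continuous
along the sequence. -/
lemma ConvexSubgradAtE.of_tendsto {ι : Type*} {l : Filter ι} [l.NeBot] {P : H → EReal}
    (hP : LowerSemicontinuous P) {a v : H} {q : ℝ} {as vs : ι → H} {qs : ι → ℝ}
    (hval : ∀ j, P (as j) = qs j) (hsub : ∀ j, ConvexSubgradAtE P (vs j) (as j))
    (ha : Tendsto as l (𝓝 a)) (hv : Tendsto vs l (𝓝 v)) (hq : Tendsto qs l (𝓝 q)) :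
    P a = q ∧ ConvexSubgradAtE P v a := by
  have hle : P a ≤ q := by
    have hq' : Tendsto (P ∘ as) l (𝓝 (q : EReal)) :=
      ((continuous_coe_real_ereal.tendsto q).comp hq).congr fun j => (hval j).symm
    exact le_of_forall_lt_imp_le_of_dense fun r hr =>
      ge_of_tendsto hq' ((ha.eventually (hP a r hr)).mono fun _ => le_of_lt)
  have hge : ∀ y, (q : EReal) + (⟪v, y - a⟫ : ℝ) ≤ P y := by
    intro y
    have hlim : Tendsto (fun j => ((qs j + ⟪vs j, y - as j⟫ : ℝ) : EReal)) l
        (𝓝 ((q + ⟪v, y - a⟫ : ℝ) : EReal)) :=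
      (continuous_coe_real_ereal.tendsto _).comp
        (hq.add (hv.inner (tendsto_const_nhds.sub ha)))
    refine le_of_tendsto' hlim fun j => ?_
    rw [EReal.coe_add, ← hval]
    exact hsub j y
  have heq : P a = q := le_antisymm hle (by simpa using hge a)
  exact ⟨heq, fun y => heq ▸ hge y⟩

lemma ConvexSubgradAt.of_tendsto {ι : Type*} {l : Filter ι} [l.NeBot] {g : H → ℝ}
    (hg : Continuous g) {a v : H} {as vs : ι → H} (hsub : ∀ j, ConvexSubgradAt g (vs j) (as j))
    (ha : Tendsto as l (𝓝 a)) (hv : Tendsto vs l (𝓝 v)) : ConvexSubgradAt g v a := fun y =>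
  le_of_tendsto' (((hg.tendsto a).comp ha).add (hv.inner (tendsto_const_nhds.sub ha)))
    fun j => hsub j y

lemma ConvexSubgradAt.exists_norm_le [ProperSpace H] {g : H → ℝ} (hg : Continuous g) (R : ℝ) :
    ∃ C, ∀ a v : H, ‖a‖ ≤ R → ConvexSubgradAt g v a → ‖v‖ ≤ C := by
  obtain ⟨M, hM⟩ := (isCompact_closedBall (0 : H) (R + 1)).exists_bound_of_continuousOn
    hg.continuousOn
  refine ⟨2 * M, fun a v ha hv => ?_⟩
  -- Test the subgradient inequality at the point at distance one in the direction of `v`.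
  set e := ‖v‖⁻¹ • v
  have he : ‖e‖ ≤ 1 := by
    rw [norm_smul, norm_inv, norm_norm]
    exact inv_mul_le_one
  have hinner : ⟪v, e⟫ = ‖v‖ := by
    rw [inner_smul_right, real_inner_self_eq_norm_sq, pow_two, ← mul_assoc, mul_comm ‖v‖⁻¹]
    exact mul_inv_mul_cancel ‖v‖
  have hga : |g a| ≤ M := hM a (by simpa using ha.trans (by linarith))
  have hge : |g (a + e)| ≤ M := hM (a + e) <| by
    rw [mem_closedBall_zero_iff]
    exact (norm_add_le a e).trans (add_le_add ha he)
  have hsub := hv (a + e)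
  rw [add_sub_cancel_left, hinner] at hsub
  linarith [(abs_le.1 hga).1, (abs_le.1 hge).2]

lemma convexSubgradAtE_of_prox_min {P : H → EReal} (hP : ProperClosedConvexE P) {L p : ℝ}
    {g u a : H} (hp : P a = p)
    (hmin : ∀ z : H, ((⟪g, a⟫ + L / 2 * ‖a - u‖ ^ 2 : ℝ) : EReal) + P a
      ≤ ((⟪g, z⟫ + L / 2 * ‖z - u‖ ^ 2 : ℝ) : EReal) + P z) :
    ConvexSubgradAtE P (-(g + L • (a - u))) a := by
  intro y
  obtain hy | hy := eq_or_ne (P y) ⊤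
  · rw [hy]
    exact le_top
  obtain ⟨q, hq⟩ : ∃ q : ℝ, P y = q := ⟨_, (EReal.coe_toReal hy (hP.1 y)).symm⟩
  set slope := ⟪g + L • (a - u), y - a⟫ + (q - p)
  have hsegment : ∀ t ∈ Ioo (0 : ℝ) 1, 0 ≤ slope + t * (L / 2 * ‖y - a‖ ^ 2) := by
    intro t ht
    have hmin_t := (hmin (t • y + (1 - t) • a)).trans (add_le_add_right (hP.2.2.2 y a t ht) _)
    rw [hp, hq] at hmin_t
    norm_cast at hmin_t
    have hpoint : t • y + (1 - t) • a = a + t • (y - a) := by module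
    rw [hpoint, add_sub_right_comm, norm_add_sq_real, inner_add_right, inner_smul_right,
      inner_smul_right, norm_smul, mul_pow, Real.norm_eq_abs, sq_abs] at hmin_t
    have hscaled : 0 ≤ t * (slope + t * (L / 2 * ‖y - a‖ ^ 2)) := by
      simp only [slope, inner_add_left, real_inner_smul_left]
      nlinarith
    exact nonneg_of_mul_nonneg_right hscaled ht.1
  have hlim : Tendsto (fun t : ℝ => slope + t * (L / 2 * ‖y - a‖ ^ 2)) (𝓝[>] 0) (𝓝 slope) := by
    refine Tendsto.mono_left ?_ nhdsWithin_le_nhds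
    exact Continuous.tendsto' (by fun_prop) _ _ (by ring)
  have hslope : 0 ≤ slope := ge_of_tendsto hlim (mem_of_superset (Ioo_mem_nhdsGT one_pos) hsegment)
  rw [hp, hq, inner_neg_left]
  norm_cast
  linarith

lemma le_conjE (g : H → ℝ) (a y : H) : ((⟪a, y⟫ - g a : ℝ) : EReal) ≤ conjE g y :=
  le_iSup (fun a : H => ((⟪a, y⟫ - g a : ℝ) : EReal)) a

lemma ConvexSubgradAt.conjE_eq {g : H → ℝ} {v a : H} (h : ConvexSubgradAt g v a) :
    conjE g v = ((⟪a, v⟫ - g a : ℝ) : EReal) := by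
  refine le_antisymm (iSup_le fun b => EReal.coe_le_coe_iff.2 ?_) (le_conjE g a v)
  have hb := h b
  rw [inner_sub_right, real_inner_comm b v, real_inner_comm a v] at hb
  linarith

/-! ### The potential on triples -/

/-- The space of triples `(x, y, w)` of vectors in `H` with its `ℓ²` inner product: `Trip n` for an
arbitrary inner product space in place of `ℝⁿ`. -/
abbrev Triple (H : Type*) := WithLp 2 (H × WithLp 2 (H × H))

/-- The triple `(a, b, c)`, as `mkTrip` over an arbitrary space. -/
def triple {G : Type*} (a b c : G) : Triple G := WithLp.toLp 2 (a, WithLp.toLp 2 (b, c))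

/-- The potential `E` as a function on triples, as `potE3` over an arbitrary space. -/
def potTriple (f : H → ℝ) (P₁ : H → EReal) (P₂ : H → ℝ) (L : ℝ) (z : Triple H) : EReal :=
  potE f P₁ P₂ L z.fst z.snd.fst z.snd.snd

lemma inner_triple (a b c a' b' c' : H) :
    ⟪triple a b c, triple a' b' c'⟫ = ⟪a, a'⟫ + (⟪b, b'⟫ + ⟪c, c'⟫) := by
  rw [WithLp.prod_inner_apply]
  rfl

lemma continuous_triple {G : Type*} [TopologicalSpace G] :
    Continuous fun p : G × G × G => triple p.1 p.2.1 p.2.2 := by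
  unfold triple
  fun_prop

lemma norm_triple_sq {G : Type*} [SeminormedAddCommGroup G] (a b c : G) :
    ‖triple a b c‖ ^ 2 = ‖a‖ ^ 2 + (‖b‖ ^ 2 + ‖c‖ ^ 2) := by
  rw [WithLp.prod_norm_sq_eq_of_L2, WithLp.prod_norm_sq_eq_of_L2]
  rfl

lemma norm_triple_le {G : Type*} [SeminormedAddCommGroup G] (a b c : G) :
    ‖triple a b c‖ ≤ ‖a‖ + ‖b‖ + ‖c‖ := by
  refine le_of_sq_le_sq ?_ (by positivity)
  rw [norm_triple_sq]
  nlinarith [mul_nonneg (norm_nonneg a) (norm_nonneg b), mul_nonneg (norm_nonneg a) (norm_nonneg c),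
    mul_nonneg (norm_nonneg b) (norm_nonneg c)]

lemma potTriple_of_convexSubgradAt {f : H → ℝ} {P₁ : H → EReal} {P₂ : H → ℝ} {L p : ℝ}
    {a y w s : H} (hp : P₁ a = p) (hs : ConvexSubgradAt P₂ y s) :
    potTriple f P₁ P₂ L (triple a y w)
      = ((f a + p - ⟪y, a - s⟫ - P₂ s + L / 2 * ‖a - w‖ ^ 2 : ℝ) : EReal) := by
  change (f a : EReal) + P₁ a - (⟪a, y⟫ : ℝ) + conjE P₂ y + (L / 2 * ‖a - w‖ ^ 2 : ℝ) = _
  rw [hs.conjE_eq, hp, inner_sub_right, real_inner_comm a y, real_inner_comm s y]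
  norm_cast
  ring

lemma le_potTriple {f : H → ℝ} {P₁ : H → EReal} (P₂ : H → ℝ) {L p : ℝ} {a v : H}
    (hp : P₁ a = p) (hv : ConvexSubgradAtE P₁ v a) (s a' y' w' : H) :
    ((f a' + (p + ⟪v, a' - a⟫) - ⟪a', y'⟫ + (⟪s, y'⟫ - P₂ s) + L / 2 * ‖a' - w'‖ ^ 2 : ℝ) : EReal)
      ≤ potTriple f P₁ P₂ L (triple a' y' w') := by
  have hP : ((p + ⟪v, a' - a⟫ : ℝ) : EReal) ≤ P₁ a' := by
    simpa only [hp, EReal.coe_add] using hv a'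
  change _ ≤ (f a' : EReal) + P₁ a' - (⟪a', y'⟫ : ℝ) + conjE P₂ y' + (L / 2 * ‖a' - w'‖ ^ 2 : ℝ)
  rw [EReal.coe_add, EReal.coe_add, EReal.coe_sub, EReal.coe_add (f a')]
  gcongr
  · exact EReal.sub_le_sub (add_le_add_right hP _) le_rfl
  · exact le_conjE P₂ s y'

/-! ### Limiting subgradients of the potential -/

lemma mem_limSubdiff_of_quadratic_minorant {h : H → EReal} {v a : H} {C : ℝ}
    (hminor : ∀ b, h a + ((⟪v, b - a⟫ - C * ‖b - a‖ ^ 2 : ℝ) : EReal) ≤ h b) :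
    v ∈ limSubdiff h a := by
  refine ⟨fun _ => a, fun _ => v, tendsto_const_nhds, tendsto_const_nhds, tendsto_const_nhds,
    fun _ ε hε => ?_⟩
  have hsmall : ∀ᶠ b in 𝓝[≠] a, C * ‖b - a‖ < ε := by
    refine nhdsWithin_le_nhds (Tendsto.eventually_lt_const hε ?_)
    exact Continuous.tendsto' (by fun_prop) _ _ (by simp)
  filter_upwards [hsmall] with b hb
  refine le_trans (add_le_add_right (EReal.coe_le_coe_iff.2 ?_) _) (hminor b)
  nlinarith [norm_nonneg (b - a)]

lemma inner_le_linearization_add_sq (a y a' y' : H) :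
    ⟪a', y'⟫ ≤ ⟪a, y⟫ + ⟪y, a' - a⟫ + ⟪a, y' - y⟫ + (‖a' - a‖ ^ 2 + ‖y' - y‖ ^ 2) := by
  have hexpand : ⟪a', y'⟫ = ⟪a, y⟫ + ⟪y, a' - a⟫ + ⟪a, y' - y⟫ + ⟪a' - a, y' - y⟫ := by
    rw [real_inner_comm _ y]
    simp only [inner_sub_left, inner_sub_right]
    ring
  nlinarith [real_inner_le_norm (a' - a) (y' - y), sq_nonneg (‖a' - a‖ - ‖y' - y‖),
    sq_nonneg ‖a' - a‖, sq_nonneg ‖y' - y‖]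

lemma norm_sub_sq_add_inner_le (a w a' w' : H) :
    ‖a - w‖ ^ 2 + 2 * (⟪a - w, a' - a⟫ - ⟪a - w, w' - w⟫) ≤ ‖a' - w'‖ ^ 2 := by
  have hdecomp : a' - w' = (a - w) + ((a' - a) - (w' - w)) := by abel
  rw [hdecomp, norm_add_sq_real, inner_sub_right (a - w) (a' - a) (w' - w)]
  linarith [sq_nonneg ‖(a' - a) - (w' - w)‖]

/-- All terms of the potential are convex except the bilinear one, whose linearization error is
quadratic. The point `s` is a subgradient of the conjugate of `P₂` at `y`. -/
lemma mem_limSubdiff_potTriple [CompleteSpace H] {f : H → ℝ} {g : H} {P₁ : H → EReal} {P₂ : H → ℝ}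
    {L p : ℝ} {a y w v s : H} (hL : 0 ≤ L) (hconv : ConvexOn ℝ univ f) (hf : HasGradientAt f g a)
    (hp : P₁ a = p) (hv : ConvexSubgradAtE P₁ v a) (hs : ConvexSubgradAt P₂ y s) :
    triple (g + v - y + L • (a - w)) (s - a) (-(L • (a - w)))
      ∈ limSubdiff (potTriple f P₁ P₂ L) (triple a y w) := by
  refine mem_limSubdiff_of_quadratic_minorant (C := 1) fun b => ?_
  obtain ⟨a', y', w', rfl⟩ : ∃ a' y' w', b = triple a' y' w' :=
    ⟨b.fst, b.snd.fst, b.snd.snd, rfl⟩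
  refine le_trans ?_ (le_potTriple P₂ hp hv s a' y' w')
  have hdiff : triple a' y' w' - triple a y w = triple (a' - a) (y' - y) (w' - w) := rfl
  rw [potTriple_of_convexSubgradAt hp hs, hdiff, norm_triple_sq, inner_triple]
  norm_cast
  have hgrad := add_inner_gradient_le_of_convexOn hconv (mem_univ a) (mem_univ a') hf
  have hbilin := inner_le_linearization_add_sq a y a' y'
  have hquad := mul_le_mul_of_nonneg_left (norm_sub_sq_add_inner_le a w a' w')
    (by positivity : 0 ≤ L / 2)
  have hsplit : ⟪y, a - s⟫ = ⟪a, y⟫ - ⟪s, y⟫ := by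
    rw [inner_sub_right, real_inner_comm a y, real_inner_comm s y]
  rw [hsplit, inner_add_left, inner_sub_left, inner_add_left, inner_neg_left,
    real_inner_smul_left, real_inner_smul_left, inner_sub_left s a, inner_sub_right s y' y]
  nlinarith [sq_nonneg ‖w' - w‖]

/-! ### Finite length from the Kurdyka–Łojasiewicz inequality -/

/-- `φ` is a desingularizing function on `[0, a)` with derivative `φd`. The conditions `φ 0 = 0` and
continuity at `0` of the KL property are left out: concavity and nonnegativity are what the descent
estimate rests on. -/
structure IsDesingularizing (a : ℝ) (φ φd : ℝ → ℝ) : Prop where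
  concaveOn : ConcaveOn ℝ (Ico 0 a) φ
  nonneg : ∀ s ∈ Ico 0 a, 0 ≤ φ s
  hasDerivAt : ∀ s ∈ Ioo 0 a, HasDerivAt φ (φd s) s
  deriv_pos : ∀ s ∈ Ioo 0 a, 0 < φd s

namespace IsDesingularizing

variable {a b : ℝ} {φ φd ψ ψd : ℝ → ℝ}

lemma id_one : IsDesingularizing 1 id (fun _ => 1) where
  concaveOn := concaveOn_id (convex_Ico 0 1)
  nonneg _ hs := hs.1
  hasDerivAt s _ := hasDerivAt_id s
  deriv_pos _ _ := one_pos

lemma mono (h : IsDesingularizing a φ φd) (hab : b ≤ a) : IsDesingularizing b φ φd where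
  concaveOn := h.concaveOn.subset (Ico_subset_Ico_right hab) (convex_Ico 0 b)
  nonneg s hs := h.nonneg s (Ico_subset_Ico_right hab hs)
  hasDerivAt s hs := h.hasDerivAt s (Ioo_subset_Ioo_right hab hs)
  deriv_pos s hs := h.deriv_pos s (Ioo_subset_Ioo_right hab hs)

lemma add (hφ : IsDesingularizing a φ φd) (hψ : IsDesingularizing a ψ ψd) :
    IsDesingularizing a (φ + ψ) (φd + ψd) where
  concaveOn := hφ.concaveOn.add hψ.concaveOn
  nonneg s hs := add_nonneg (hφ.nonneg s hs) (hψ.nonneg s hs)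
  hasDerivAt s hs := (hφ.hasDerivAt s hs).add (hψ.hasDerivAt s hs)
  deriv_pos s hs := add_pos (hφ.deriv_pos s hs) (hψ.deriv_pos s hs)

lemma deriv_mul_sub_le {s t : ℝ} (h : IsDesingularizing a φ φd) (hs : s ∈ Ioo 0 a) (ht : 0 ≤ t)
    (hts : t ≤ s) : φd s * (s - t) ≤ φ s - φ t := by
  obtain rfl | hlt := hts.eq_or_lt
  · simp
  have hslope := h.concaveOn.le_slope_of_hasDerivAt ⟨ht, hlt.trans hs.2⟩ (Ioo_subset_Ico_self hs)
    hlt (h.hasDerivAt s hs)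
  rwa [slope_def_field, le_div_iff₀ (sub_pos.2 hlt)] at hslope

/-- Concavity turns the decrease `c * r ^ 2` and the KL inequality into
`r ^ 2 ≤ C / c * (φ s - φ t) * (r + r₀)`, to which the arithmetic–geometric mean inequality
applies. -/
lemma step_le {c C s t r r₀ : ℝ} (h : IsDesingularizing a φ φd) (hc : 0 < c) (hC : 0 ≤ C)
    (hr : 0 ≤ r) (hr₀ : 0 ≤ r₀) (hs : s ∈ Ico 0 a) (ht : 0 ≤ t) (hdec : t + c * r ^ 2 ≤ s)
    (hKL : 0 < s → 1 ≤ φd s * (C * (r + r₀))) :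
    r ≤ C / c * (φ s - φ t) + (r + r₀) / 4 := by
  have hts : t ≤ s := by nlinarith [sq_nonneg r]
  obtain rfl | hpos := hs.1.eq_or_lt
  · have hr_eq : r = 0 := pow_eq_zero_iff two_ne_zero |>.1 (by nlinarith [sq_nonneg r])
    rw [le_antisymm hts ht, hr_eq]
    linarith
  have hφd := h.deriv_pos s ⟨hpos, hs.2⟩
  set Δ := φ s - φ t
  have hgain : φd s * (c * r ^ 2) ≤ Δ :=
    (mul_le_mul_of_nonneg_left (by linarith) hφd.le).trans
      (h.deriv_mul_sub_le ⟨hpos, hs.2⟩ ht hts)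
  have hΔ : 0 ≤ Δ := le_trans (by positivity) hgain
  have hsq : r ^ 2 ≤ C / c * Δ * (r + r₀) := by
    refine le_of_mul_le_mul_left ?_ hc
    calc c * r ^ 2 = 1 * (c * r ^ 2) := (one_mul _).symm
      _ ≤ φd s * (C * (r + r₀)) * (c * r ^ 2) := by gcongr; exact hKL hpos
      _ = C * (r + r₀) * (φd s * (c * r ^ 2)) := by ring
      _ ≤ C * (r + r₀) * Δ := by gcongr
      _ = c * (C / c * Δ * (r + r₀)) := by field_simp
  refine le_of_sq_le_sq ?_ (by positivity)
  nlinarith [sq_nonneg (C / c * Δ - (r + r₀) / 4)]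

end IsDesingularizing

/-- `φ` is a desingularizing function on `[0, a)` for which the KL inequality of `h` at level `ζ`
holds on `S`. -/
structure HasKLInequality (h : H → EReal) (ζ a : ℝ) (φ φd : ℝ → ℝ) (S : Set H) : Prop extends
    IsDesingularizing a φ φd where
  one_le : ∀ z ∈ S, ζ < h z → h z < ζ + a → (limSubdiff h z).Nonempty →
    1 ≤ φd ((h z).toReal - ζ) * infDist 0 (limSubdiff h z)

lemma KLAt.exists_hasKLInequality {h : H → EReal} {q : H} {ζ : ℝ} (hKL : KLAt h q) (hq : h q = ζ) :
    ∃ a > 0, ∃ φ φd, ∃ U ∈ 𝓝 q, HasKLInequality h ζ a φ φd U := by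
  obtain ⟨a, ha, U, hU, φ, φd, -, hconc, -, hnonneg, hderiv, hineq⟩ := hKL
  simp only [hq, EReal.toReal_coe] at hineq
  exact ⟨a, ha, φ, φd, U, hU,
    ⟨⟨hconc, hnonneg, fun s hs => (hderiv s hs).1, fun s hs => (hderiv s hs).2⟩, hineq⟩⟩

namespace HasKLInequality

variable {h : H → EReal} {ζ a b : ℝ} {φ φd ψ ψd : ℝ → ℝ} {S T : Set H}

lemma union (hφ : HasKLInequality h ζ a φ φd S) (hψ : HasKLInequality h ζ b ψ ψd T) :
    HasKLInequality h ζ (min a b) (φ + ψ) (φd + ψd) (S ∪ T) where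
  toIsDesingularizing := (hφ.toIsDesingularizing.mono (min_le_left a b)).add
    (hψ.toIsDesingularizing.mono (min_le_right a b))
  one_le z hz hlt hltab hne := by
    obtain ⟨e, he⟩ : ∃ e : ℝ, h z = e :=
      ⟨_, (EReal.coe_toReal hltab.ne_top (ne_bot_of_gt hlt)).symm⟩
    obtain ⟨hpos, hlt'⟩ : 0 < e - ζ ∧ e - ζ < min a b := by
      rw [he] at hlt hltab
      norm_cast at hlt hltab
      constructor <;> linarith
    have hφpos := hφ.deriv_pos (e - ζ) ⟨hpos, hlt'.trans_le (min_le_left a b)⟩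
    have hψpos := hψ.deriv_pos (e - ζ) ⟨hpos, hlt'.trans_le (min_le_right a b)⟩
    have hlt_add : ∀ r, min a b ≤ r → h z < ζ + r := fun r hr =>
      hltab.trans_le (add_le_add_right (EReal.coe_le_coe_iff.2 hr) _)
    have hdist : 0 ≤ infDist 0 (limSubdiff h z) := infDist_nonneg
    rw [he, EReal.toReal_coe, Pi.add_apply, add_mul]
    obtain hz | hz := hz
    · have hone := hφ.one_le z hz hlt (hlt_add a (min_le_left a b)) hne
      rw [he, EReal.toReal_coe] at hone
      exact le_add_of_le_of_nonneg hone (by positivity)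
    · have hone := hψ.one_le z hz hlt (hlt_add b (min_le_right a b)) hne
      rw [he, EReal.toReal_coe] at hone
      exact le_add_of_nonneg_of_le (by positivity) hone

end HasKLInequality

/-- Finitely many of the neighbourhoods provided by the KL property cover the set, and the
corresponding desingularizing functions can be added up. -/
lemma exists_hasKLInequality_of_isCompact {h : H → EReal} {K : Set H} {ζ : ℝ} (hK : IsCompact K)
    (hval : ∀ q ∈ K, h q = ζ) (hKL : ∀ q ∈ K, KLAt h q) :
    ∃ a > 0, ∃ φ φd, ∃ U ∈ 𝓝ˢ K, HasKLInequality h ζ a φ φd U := by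
  refine hK.induction_on (p := fun S => ∃ a > 0, ∃ φ φd, ∃ U ∈ 𝓝ˢ S, HasKLInequality h ζ a φ φd U)
    ?_ ?_ ?_ ?_
  · exact ⟨1, one_pos, id, fun _ => 1, ∅, by simp, IsDesingularizing.id_one, fun _ hz => hz.elim⟩
  · rintro S T hST ⟨a, ha, φ, φd, U, hU, hφ⟩
    exact ⟨a, ha, φ, φd, U, nhdsSet_mono hST hU, hφ⟩
  · rintro S T ⟨a, ha, φ, φd, U, hU, hφ⟩ ⟨b, hb, ψ, ψd, V, hV, hψ⟩
    exact ⟨min a b, lt_min ha hb, φ + ψ, φd + ψd, U ∪ V,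
      union_mem_nhdsSet hU hV, hφ.union hψ⟩
  · intro q hq
    obtain ⟨a, ha, φ, φd, U, hU, hφ⟩ := (hKL q hq).exists_hasKLInequality (hval q hq)
    exact ⟨interior U, mem_nhdsWithin_of_mem_nhds (interior_mem_nhds.2 hU), a, ha, φ, φd, U,
      subset_interior_iff_mem_nhdsSet.1 Subset.rfl, hφ⟩

lemma tendsto_zero_of_add_sq_le {c ζ : ℝ} {d e : ℕ → ℝ} (hc : 0 < c)
    (hlim : Tendsto e atTop (𝓝 ζ)) (hdec : ∀ k, e (k + 1) + c * d k ^ 2 ≤ e k) :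
    Tendsto d atTop (𝓝 0) := by
  have hgap : Tendsto (fun k => (e k - e (k + 1)) / c) atTop (𝓝 0) := by
    simpa using (hlim.sub ((tendsto_add_atTop_iff_nat 1).2 hlim)).div_const c
  have hsq : Tendsto (fun k => d k ^ 2) atTop (𝓝 0) := by
    refine squeeze_zero (fun k => sq_nonneg _) (fun k => ?_) hgap
    rw [le_div_iff₀ hc]
    linarith [hdec k]
  refine (tendsto_zero_iff_abs_tendsto_zero d).2 ?_
  simpa only [Real.sqrt_sq_eq_abs, Real.sqrt_zero] using! hsq.sqrt

lemma summable_of_eventually_add_le {d Φ : ℕ → ℝ} (hd : ∀ k, 0 ≤ d k) (hΦ : ∀ᶠ k in atTop, 0 ≤ Φ k)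
    (h : ∀ᶠ k in atTop, d k + Φ (k + 1) ≤ Φ k) : Summable d := by
  obtain ⟨N, hN⟩ := eventually_atTop.1 (hΦ.and h)
  refine (summable_nat_add_iff N).1
    (summable_of_sum_range_le (c := Φ N) (fun k => hd _) fun n => ?_)
  have htelescope : ∑ k ∈ Finset.range n, d (k + N) + Φ (n + N) ≤ Φ N := by
    induction n with
    | zero => simp
    | succ n ih =>
      rw [Finset.sum_range_succ, Nat.add_right_comm n 1 N]
      linarith [(hN (n + N) (by lia)).2]
  linarith [(hN (n + N) (by lia)).1]

theorem summable_of_kl_descent {h : H → EReal} {K : Set H} {Z : ℕ → H} {c C ζ : ℝ} {d e : ℕ → ℝ}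
    (hKL : IsKLFun h) (hK : IsCompact K) (hZ : ∀ k, Z k ∈ K) (hc : 0 < c) (hC : 0 ≤ C)
    (hval : ∀ k, h (Z k) = e k) (hlim : Tendsto e atTop (𝓝 ζ)) (hd : ∀ k, 0 ≤ d k)
    (hdec : ∀ k, e (k + 1) + c * d k ^ 2 ≤ e k)
    (hsub : ∀ k, ∃ v ∈ limSubdiff h (Z (k + 1)), ‖v‖ ≤ C * (d (k + 1) + d k))
    (hcluster : ∀ q, MapClusterPt q atTop Z → h q = ζ ∧ (limSubdiff h q).Nonempty) :
    Summable d := by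
  have hanti : Antitone e := antitone_nat_of_succ_le fun k => by
    linarith [hdec k, mul_nonneg hc.le (sq_nonneg (d k))]
  have hζ : ∀ k, ζ ≤ e k := hanti.le_of_tendsto hlim
  have hK' : IsCompact {q | MapClusterPt q atTop Z} :=
    hK.of_isClosed_subset isClosed_setOfPred_clusterPt fun q hq =>
      hK.isClosed.mem_of_mapClusterPt hq (.of_forall hZ)
  obtain ⟨a, ha, φ, φd, U, hU, hφ⟩ := exists_hasKLInequality_of_isCompact hK'
    (fun q hq => (hcluster q hq).1) fun q hq => hKL q (hcluster q hq).2
  have hnear : ∀ᶠ k in atTop, Z k ∈ U ∧ e k - ζ ∈ Ico 0 a := by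
    have hZU := (hK.tendsto_nhdsSet_of_mapClusterPt (.of_forall hZ) fun q _ hq => hq) hU
    have hea := hlim.eventually_lt_const (lt_add_of_pos_right ζ ha)
    filter_upwards [hZU, hea] with k hkU hka
    exact ⟨hkU, sub_nonneg.2 (hζ k), by linarith⟩
  have hnear' := (tendsto_add_atTop_nat 1).eventually hnear
  refine (summable_nat_add_iff 1).1 (summable_of_eventually_add_le (fun k => hd (k + 1))
    (Φ := fun k => 2 * (C / c) * φ (e (k + 1) - ζ) + d k / 2) ?_ ?_)
  · filter_upwards [hnear'] with k hk
    have := hφ.nonneg _ hk.2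
    have := hd k
    positivity
  · filter_upwards [hnear'] with k hk
    have hstep := hφ.step_le hc hC (hd (k + 1)) (hd k) hk.2 (sub_nonneg.2 (hζ (k + 2)))
      (by linarith [hdec (k + 1)]) fun hpos => ?_
    · linarith
    obtain ⟨v, hv, hvC⟩ := hsub k
    have hone := hφ.one_le _ hk.1 (by rw [hval]; exact_mod_cast sub_pos.1 hpos)
      (by rw [hval]; exact_mod_cast sub_lt_iff_lt_add'.1 hk.2.2) ⟨v, hv⟩
    rw [hval, EReal.toReal_coe] at hone
    have hφd := hφ.deriv_pos _ ⟨hpos, hk.2.2⟩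
    have hdist : infDist 0 (limSubdiff h (Z (k + 1))) ≤ C * (d (k + 1) + d k) :=
      (infDist_le_dist_of_mem hv).trans (by rwa [dist_zero_left])
    exact hone.trans (mul_le_mul_of_nonneg_left hdist hφd.le)

/-! ### One step of the algorithm -/

/-- Data of a DC program `F = f + P₁ - P₂`: `f` is convex with `L`-Lipschitz gradient `f'`, `P₁` is
proper, closed and convex, and `P₂` is continuous. -/
structure IsSmoothDC [CompleteSpace H] (f : H → ℝ) (f' : H → H) (P₁ : H → EReal) (P₂ : H → ℝ)
    (L : ℝ) : Prop where
  pos : 0 < L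
  convexOn : ConvexOn ℝ univ f
  hasGradientAt : ∀ y, HasGradientAt f (f' y) y
  norm_sub_le : ∀ y z, ‖f' y - f' z‖ ≤ L * ‖y - z‖
  properClosedConvex : ProperClosedConvexE P₁
  continuous_right : Continuous P₂

namespace IsSmoothDC

variable [CompleteSpace H] {f : H → ℝ} {f' : H → H} {P₁ : H → EReal} {P₂ : H → ℝ} {L : ℝ}

lemma continuous_left (h : IsSmoothDC f f' P₁ P₂ L) : Continuous f :=
  continuous_iff_continuousAt.2 fun y => (h.hasGradientAt y).differentiableAt.continuousAt

lemma continuous_gradient (h : IsSmoothDC f f' P₁ P₂ L) : Continuous f' :=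
  (LipschitzWith.of_dist_le_mul (K := ⟨L, h.pos.le⟩) fun y z => by
    simpa only [dist_eq_norm] using! h.norm_sub_le y z).continuous

end IsSmoothDC

/-- Stationary points of `f + P₁ - P₂`, where `f'` is the gradient of `f`. -/
def IsDCStationary (f' : H → H) (P₁ : H → EReal) (P₂ : H → ℝ) (a : H) : Prop :=
  ∃ v₁ v₂, ConvexSubgradAtE P₁ v₁ a ∧ ConvexSubgradAt P₂ v₂ a ∧ f' a + v₁ - v₂ = 0

/-- The objective `F = f + P₁ - P₂` as a real number, meaningful on the domain of `P₁`. -/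
def dcObjective {G : Type*} (f : G → ℝ) (P₁ : G → EReal) (P₂ : G → ℝ) (y : G) : ℝ :=
  f y + (P₁ y).toReal - P₂ y

/-- The extrapolated point `u^k`. -/
def extrap (β : ℕ → ℝ) (x : ℕ → H) (k : ℕ) : H :=
  x k + β k • (x k - x (k - 1))

/-- The subgradient of `P₁` at `x^{k+1}` given by the optimality condition of the `k`-th
subproblem. -/
def proxSubgrad (f' : H → H) (L : ℝ) (β : ℕ → ℝ) (x ξ : ℕ → H) (k : ℕ) : H :=
  -(f' (extrap β x k) - ξ (k + 1) + L • (x (k + 1) - extrap β x k))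

/-- The triple `(x^{k+1}, ξ^{k+1}, x^k)` at which the potential is evaluated. -/
def iterTriple {G : Type*} (x ξ : ℕ → G) (k : ℕ) : Triple G :=
  triple (x (k + 1)) (ξ (k + 1)) (x k)

/-- The value of the potential at `iterTriple x ξ k`, with the conjugate of `P₂` at `ξ^{k+1}`
replaced by its value `⟪ξ^{k+1}, x^k⟫ - P₂ (x^k)` from the Fenchel equality. -/
def iterPot (f : H → ℝ) (P₁ : H → EReal) (P₂ : H → ℝ) (L : ℝ) (x ξ : ℕ → H) (k : ℕ) : ℝ :=
  f (x (k + 1)) + (P₁ (x (k + 1))).toReal - ⟪ξ (k + 1), x (k + 1) - x k⟫ - P₂ (x k)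
    + L / 2 * ‖x (k + 1) - x k‖ ^ 2

lemma norm_sub_extrap (β : ℕ → ℝ) (x : ℕ → H) (k : ℕ) :
    ‖x k - extrap β x k‖ = |β k| * ‖x k - x (k - 1)‖ := by
  rw [extrap, sub_add_cancel_left, norm_neg, norm_smul, Real.norm_eq_abs]

lemma prox_step_decrease [CompleteSpace H] {f : H → ℝ} {f' : H → H} {P : H → EReal} {L : ℝ}
    (hconv : ConvexOn ℝ univ f) (hf : ∀ y, HasGradientAt f (f' y) y)
    (hlip : ∀ y z, ‖f' y - f' z‖ ≤ L * ‖y - z‖) {a b u ξ : H} {p q : ℝ}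
    (hp : P a = p) (hq : P b = q) (hsub : ConvexSubgradAtE P (-(f' u - ξ + L • (b - u))) b) :
    f b + q - ⟪ξ, b - a⟫ + L / 2 * ‖b - a‖ ^ 2 ≤ f a + p + L / 2 * ‖a - u‖ ^ 2 := by
  have hprox := hsub.add_inner_le hq hp
  have hdescent := le_add_inner_gradient_add_sq hf hlip u b
  have hgrad := add_inner_gradient_le_of_convexOn hconv (mem_univ u) (mem_univ a) (hf u)
  have hsplit : a - u = (b - u) + (a - b) := by abel
  rw [inner_neg_left, inner_add_left, inner_sub_left, real_inner_smul_left] at hprox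
  rw [hsplit, inner_add_right] at hgrad
  rw [hsplit, norm_add_sq_real, norm_sub_rev a b, ← neg_sub a b, inner_neg_right]
  linarith

lemma norm_triple_residual_le {f' : H → H} {L δ : ℝ} (hL : 0 ≤ L)
    (hlip : ∀ y z, ‖f' y - f' z‖ ≤ L * ‖y - z‖) {a b u ξ : H} (hu : ‖a - u‖ ≤ δ) :
    ‖triple (f' b + -(f' u - ξ + L • (b - u)) - ξ + L • (b - a)) (a - b) (-(L • (b - a)))‖
      ≤ (4 * L + 1) * (‖b - a‖ + δ) := by
  have hcancel : f' b + -(f' u - ξ + L • (b - u)) - ξ + L • (b - a)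
      = (f' b - f' u) + (L • (b - a) - L • (b - u)) := by abel
  have hbu : ‖b - u‖ ≤ ‖b - a‖ + δ := (norm_sub_le_norm_sub_add_norm_sub b a u).trans (by gcongr)
  have hδ : 0 ≤ δ := (norm_nonneg _).trans hu
  have hfst : ‖(f' b - f' u) + (L • (b - a) - L • (b - u))‖
      ≤ L * (‖b - a‖ + δ) + (L * ‖b - a‖ + L * (‖b - a‖ + δ)) := by
    refine norm_add_le_of_le ((hlip b u).trans (by gcongr)) (norm_sub_le_of_le ?_ ?_)
    · rw [norm_smul, Real.norm_of_nonneg hL]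
    · rw [norm_smul, Real.norm_of_nonneg hL]
      gcongr
  rw [hcancel]
  refine (norm_triple_le _ _ _).trans ?_
  rw [norm_neg, norm_smul, Real.norm_of_nonneg hL, norm_sub_rev a b]
  nlinarith [mul_nonneg hL hδ]

namespace IsPDCAe

variable {f : H → ℝ} {f' : H → H} {P₁ : H → EReal} {P₂ : H → ℝ} {L B ζ : ℝ} {β : ℕ → ℝ}
  {x ξ : ℕ → H}

lemma ne_top (hx : IsPDCAe f' P₁ P₂ L β x ξ) : ∀ k, P₁ (x k) ≠ ⊤
  | 0 => hx.1
  | k + 1 => fun htop => by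
    have hmin := hx.2.2 k (x 0)
    rw [htop, EReal.coe_add_top, top_le_iff] at hmin
    exact EReal.add_ne_top (EReal.coe_ne_top _) hx.1 hmin

lemma eq_coe_toReal (hx : IsPDCAe f' P₁ P₂ L β x ξ) (hP₁ : ProperClosedConvexE P₁) (k : ℕ) :
    P₁ (x k) = (P₁ (x k)).toReal :=
  (EReal.coe_toReal (hx.ne_top k) (hP₁.1 _)).symm

lemma convexSubgradAtE_proxSubgrad (hx : IsPDCAe f' P₁ P₂ L β x ξ)
    (hP₁ : ProperClosedConvexE P₁) (k : ℕ) :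
    ConvexSubgradAtE P₁ (proxSubgrad f' L β x ξ k) (x (k + 1)) :=
  convexSubgradAtE_of_prox_min hP₁ (hx.eq_coe_toReal hP₁ (k + 1)) (hx.2.2 k)

lemma potTriple_iterTriple (hx : IsPDCAe f' P₁ P₂ L β x ξ) (hP₁ : ProperClosedConvexE P₁)
    (f : H → ℝ) (k : ℕ) :
    potTriple f P₁ P₂ L (iterTriple x ξ k) = iterPot f P₁ P₂ L x ξ k :=
  potTriple_of_convexSubgradAt (hx.eq_coe_toReal hP₁ (k + 1)) (hx.2.1 k)

lemma dcObjective_add_le_iterPot (hx : IsPDCAe f' P₁ P₂ L β x ξ) (f : H → ℝ) (k : ℕ) :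
    dcObjective f P₁ P₂ (x (k + 1)) + L / 2 * ‖x (k + 1) - x k‖ ^ 2
      ≤ iterPot f P₁ P₂ L x ξ k := by
  have hsub := hx.2.1 k (x (k + 1))
  rw [dcObjective, iterPot]
  linarith

lemma iterPot_le_dcObjective_add [CompleteSpace H] (hx : IsPDCAe f' P₁ P₂ L β x ξ)
    (hF : IsSmoothDC f f' P₁ P₂ L) (k : ℕ) :
    iterPot f P₁ P₂ L x ξ k
      ≤ dcObjective f P₁ P₂ (x k) + L / 2 * ‖x k - extrap β x k‖ ^ 2 := by
  have hP₁ := hF.properClosedConvex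
  have hstep := prox_step_decrease hF.convexOn hF.hasGradientAt hF.norm_sub_le
    (hx.eq_coe_toReal hP₁ k) (hx.eq_coe_toReal hP₁ (k + 1)) (hx.convexSubgradAtE_proxSubgrad hP₁ k)
  rw [iterPot, dcObjective]
  linarith

lemma iterPot_succ_add_le [CompleteSpace H] (hx : IsPDCAe f' P₁ P₂ L β x ξ)
    (hF : IsSmoothDC f f' P₁ P₂ L) (hβ : ∀ k, |β k| ≤ B) (k : ℕ) :
    iterPot f P₁ P₂ L x ξ (k + 1) + L / 2 * (1 - B ^ 2) * ‖x (k + 1) - x k‖ ^ 2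
      ≤ iterPot f P₁ P₂ L x ξ k := by
  have hupper := hx.iterPot_le_dcObjective_add hF (k + 1)
  have hlower := hx.dcObjective_add_le_iterPot f k
  have hextrap : L / 2 * ‖x (k + 1) - extrap β x (k + 1)‖ ^ 2
      ≤ L / 2 * (B * ‖x (k + 1) - x k‖) ^ 2 := by
    have := hF.pos
    rw [norm_sub_extrap, Nat.add_sub_cancel]
    gcongr
    exact hβ (k + 1)
  linarith

lemma exists_iterPot_succ_add_le [CompleteSpace H] (hx : IsPDCAe f' P₁ P₂ L β x ξ)
    (hF : IsSmoothDC f f' P₁ P₂ L) (hB : B < 1) (hβ : ∀ k, |β k| ≤ B) :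
    ∃ c > 0, ∀ k, iterPot f P₁ P₂ L x ξ (k + 1) + c * ‖x (k + 1) - x k‖ ^ 2
      ≤ iterPot f P₁ P₂ L x ξ k := by
  have hB_sq : B ^ 2 < 1 := pow_lt_one₀ ((abs_nonneg _).trans (hβ 0)) hB two_ne_zero
  exact ⟨_, mul_pos (half_pos hF.pos) (sub_pos.2 hB_sq), hx.iterPot_succ_add_le hF hβ⟩

lemma antitone_iterPot [CompleteSpace H] (hx : IsPDCAe f' P₁ P₂ L β x ξ)
    (hF : IsSmoothDC f f' P₁ P₂ L) (hβ : ∀ k, |β k| ≤ 1) : Antitone (iterPot f P₁ P₂ L x ξ) :=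
  antitone_nat_of_succ_le fun k => by simpa using hx.iterPot_succ_add_le hF hβ k

lemma isBounded_range [CompleteSpace H] (hx : IsPDCAe f' P₁ P₂ L β x ξ)
    (hF : IsSmoothDC f f' P₁ P₂ L) (hβ : ∀ k, |β k| ≤ 1)
    (hlevel : ∀ γ : ℝ, IsBounded {y | (f y : EReal) + P₁ y - (P₂ y : EReal) ≤ γ}) :
    IsBounded (range x) := by
  refine ((hlevel (iterPot f P₁ P₂ L x ξ 0)).insert (x 0)).subset ?_
  rintro _ ⟨_ | k, rfl⟩
  · exact mem_insert _ _
  refine mem_insert_of_mem _ ?_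
  rw [mem_ofPred_eq, hx.eq_coe_toReal hF.properClosedConvex]
  norm_cast
  calc dcObjective f P₁ P₂ (x (k + 1))
      ≤ dcObjective f P₁ P₂ (x (k + 1)) + L / 2 * ‖x (k + 1) - x k‖ ^ 2 :=
        le_add_of_nonneg_right (by have := hF.pos; positivity)
    _ ≤ iterPot f P₁ P₂ L x ξ k := hx.dcObjective_add_le_iterPot f k
    _ ≤ iterPot f P₁ P₂ L x ξ 0 := hx.antitone_iterPot hF hβ k.zero_le

lemma bddBelow_range_iterPot [ProperSpace H] (hx : IsPDCAe f' P₁ P₂ L β x ξ)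
    (hF : IsSmoothDC f f' P₁ P₂ L) (hbdd : IsBounded (range x)) :
    BddBelow (range (iterPot f P₁ P₂ L x ξ)) := by
  have hP₁ := hF.properClosedConvex
  obtain ⟨R, hR⟩ := hbdd.subset_closedBall 0
  -- A real minorant of the objective that is continuous, although `P₁` itself is not.
  let minorant : H → ℝ := fun y =>
    f y + ((P₁ (x 1)).toReal + ⟪proxSubgrad f' L β x ξ 0, y - x 1⟫) - P₂ y
  have hcont : Continuous minorant := by
    have := hF.continuous_left
    have := hF.continuous_right
    fun_prop
  obtain ⟨m, hm⟩ := (isCompact_closedBall (0 : H) R).bddBelow_image hcont.continuousOn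
  refine ⟨m, ?_⟩
  rintro _ ⟨k, rfl⟩
  have hminorant : minorant (x (k + 1)) ≤ dcObjective f P₁ P₂ (x (k + 1)) := by
    have := (hx.convexSubgradAtE_proxSubgrad hP₁ 0).add_inner_le
      (hx.eq_coe_toReal hP₁ 1) (hx.eq_coe_toReal hP₁ (k + 1))
    simp only [minorant, dcObjective]
    gcongr
  calc m ≤ minorant (x (k + 1)) := hm (mem_image_of_mem _ (hR (mem_range_self _)))
    _ ≤ dcObjective f P₁ P₂ (x (k + 1)) := hminorant
    _ ≤ dcObjective f P₁ P₂ (x (k + 1)) + L / 2 * ‖x (k + 1) - x k‖ ^ 2 :=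
        le_add_of_nonneg_right (by have := hF.pos; positivity)
    _ ≤ iterPot f P₁ P₂ L x ξ k := hx.dcObjective_add_le_iterPot f k

lemma exists_isCompact_iterTriple_mem [ProperSpace H] (hx : IsPDCAe f' P₁ P₂ L β x ξ)
    (hP₂ : Continuous P₂) (hbdd : IsBounded (range x)) :
    ∃ K, IsCompact K ∧ ∀ k, iterTriple x ξ k ∈ K := by
  obtain ⟨R, hR⟩ := hbdd.subset_closedBall 0
  have hxR : ∀ k, x k ∈ closedBall 0 R := fun k => hR (mem_range_self k)
  obtain ⟨C, hC⟩ := ConvexSubgradAt.exists_norm_le hP₂ R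
  have hξC : ∀ k, ξ (k + 1) ∈ closedBall 0 C := fun k =>
    mem_closedBall_zero_iff.2 (hC _ _ (mem_closedBall_zero_iff.1 (hxR k)) (hx.2.1 k))
  have hball := isCompact_closedBall (0 : H)
  exact ⟨_, ((hball R).prod ((hball C).prod (hball R))).image continuous_triple,
    fun k => ⟨(x (k + 1), ξ (k + 1), x k), ⟨hxR _, hξC _, hxR _⟩, rfl⟩⟩

lemma exists_mem_limSubdiff_norm_le [CompleteSpace H] (hx : IsPDCAe f' P₁ P₂ L β x ξ)
    (hF : IsSmoothDC f f' P₁ P₂ L) (hβ : ∀ k, |β k| ≤ 1) (k : ℕ) :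
    ∃ v ∈ limSubdiff (potTriple f P₁ P₂ L) (iterTriple x ξ k),
      ‖v‖ ≤ (4 * L + 1) * (‖x (k + 1) - x k‖ + ‖x k - x (k - 1)‖) := by
  have hP₁ := hF.properClosedConvex
  refine ⟨_, mem_limSubdiff_potTriple hF.pos.le hF.convexOn (hF.hasGradientAt _)
    (hx.eq_coe_toReal hP₁ (k + 1)) (hx.convexSubgradAtE_proxSubgrad hP₁ k) (hx.2.1 k),
    norm_triple_residual_le hF.pos.le hF.norm_sub_le ?_⟩
  rw [norm_sub_extrap]
  exact mul_le_of_le_one_left (norm_nonneg _) (hβ k)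

end IsPDCAe

/-! ### Cluster points and convergence -/

lemma tendsto_extrap_comp {β : ℕ → ℝ} {x : ℕ → H} {ι : Type*} {l : Filter ι} {θ : ι → ℕ}
    {a : H} (hβ : ∀ k, |β k| ≤ 1)
    (hstep : Tendsto (fun k => ‖x (k + 1) - x k‖) atTop (𝓝 0)) (hθ : Tendsto θ l atTop)
    (ha : Tendsto (x ∘ θ) l (𝓝 a)) : Tendsto (extrap β x ∘ θ) l (𝓝 a) := by
  have hprev : Tendsto (fun k => ‖x k - x (k - 1)‖) atTop (𝓝 0) :=
    (tendsto_add_atTop_iff_nat 1).1 hstep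
  have hdiff : Tendsto (fun k => x k - extrap β x k) atTop (𝓝 0) := by
    refine squeeze_zero_norm (fun k => ?_) hprev
    rw [norm_sub_extrap]
    exact mul_le_of_le_one_left (norm_nonneg _) (hβ k)
  simpa using! ha.sub (hdiff.comp hθ)

lemma exists_tendsto_of_mapClusterPt_iterTriple {G : Type*} [NormedAddCommGroup G] {x ξ : ℕ → G}
    {q : Triple G} (hstep : Tendsto (fun k => ‖x (k + 1) - x k‖) atTop (𝓝 0))
    (hq : MapClusterPt q atTop (iterTriple x ξ)) :
    ∃ a b, q = triple a b a ∧ ∃ θ : ℕ → ℕ, Tendsto θ atTop atTop ∧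
      Tendsto (fun j => x (θ j)) atTop (𝓝 a) ∧ Tendsto (fun j => x (θ j + 1)) atTop (𝓝 a) ∧
      Tendsto (fun j => ξ (θ j + 1)) atTop (𝓝 b) := by
  obtain ⟨θ, hθ, hlim⟩ := hq.tendsto_subseq
  have hfst : Tendsto (fun j => x (θ j + 1)) atTop (𝓝 q.fst) :=
    ((WithLp.continuous_fst 2 _ _).tendsto _).comp hlim
  have hsnd := ((WithLp.continuous_snd 2 _ _).tendsto _).comp hlim
  have hmid : Tendsto (fun j => ξ (θ j + 1)) atTop (𝓝 q.snd.fst) :=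
    ((WithLp.continuous_fst 2 _ _).tendsto _).comp hsnd
  have hlast : Tendsto (fun j => x (θ j)) atTop (𝓝 q.snd.snd) :=
    ((WithLp.continuous_snd 2 _ _).tendsto _).comp hsnd
  have heq : q.fst = q.snd.snd := by
    have hdiff := tendsto_nhds_unique (hfst.sub hlast).norm (hstep.comp hθ.tendsto_atTop)
    exact sub_eq_zero.1 (norm_eq_zero.1 hdiff)
  rw [← heq] at hlast
  exact ⟨q.fst, q.snd.fst, congrArg (triple q.fst q.snd.fst) heq.symm, θ, hθ.tendsto_atTop, hlast,
    hfst, hmid⟩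

/-- As `P₁` need not be continuous, the limit of its values is read off that of the potential. -/
lemma tendsto_toReal_of_tendsto_iterPot {f : H → ℝ} {P₁ : H → EReal} {P₂ : H → ℝ} {L ζ : ℝ}
    {x ξ : ℕ → H} {ι : Type*} {l : Filter ι} {θ : ι → ℕ} {a b : H} (hf : Continuous f)
    (hP₂ : Continuous P₂) (hpot : Tendsto (iterPot f P₁ P₂ L x ξ) atTop (𝓝 ζ))
    (hθ : Tendsto θ l atTop) (ha : Tendsto (fun j => x (θ j)) l (𝓝 a))
    (ha' : Tendsto (fun j => x (θ j + 1)) l (𝓝 a))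
    (hb : Tendsto (fun j => ξ (θ j + 1)) l (𝓝 b)) :
    Tendsto (fun j => (P₁ (x (θ j + 1))).toReal) l (𝓝 (ζ - f a + P₂ a)) := by
  have hdiff := ha'.sub ha
  have hlim := (((hpot.comp hθ).sub ((hf.tendsto a).comp ha')).add (hb.inner hdiff)).add
    (((hP₂.tendsto a).comp ha).sub ((hdiff.norm.pow 2).const_mul (L / 2)))
  simp only [sub_self, inner_zero_right, norm_zero, add_zero, ne_eq, OfNat.ofNat_ne_zero,
    not_false_eq_true, zero_pow, mul_zero, sub_zero] at hlim
  refine hlim.congr fun j => ?_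
  simp only [iterPot, Function.comp_apply]
  ring

namespace IsPDCAe

variable {f : H → ℝ} {f' : H → H} {P₁ : H → EReal} {P₂ : H → ℝ} {L B ζ : ℝ} {β : ℕ → ℝ}
  {x ξ : ℕ → H}

lemma exists_of_mapClusterPt_iterTriple [CompleteSpace H] (hx : IsPDCAe f' P₁ P₂ L β x ξ)
    (hF : IsSmoothDC f f' P₁ P₂ L) (hβ : ∀ k, |β k| ≤ 1)
    (hpot : Tendsto (iterPot f P₁ P₂ L x ξ) atTop (𝓝 ζ))
    (hstep : Tendsto (fun k => ‖x (k + 1) - x k‖) atTop (𝓝 0)) {q : Triple H}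
    (hq : MapClusterPt q atTop (iterTriple x ξ)) :
    ∃ a b, q = triple a b a ∧ P₁ a = ((ζ - f a + P₂ a : ℝ) : EReal) ∧
      ConvexSubgradAtE P₁ (b - f' a) a ∧ ConvexSubgradAt P₂ b a := by
  have hP₁ := hF.properClosedConvex
  obtain ⟨a, b, rfl, θ, hθ, ha, ha', hb⟩ := exists_tendsto_of_mapClusterPt_iterTriple hstep hq
  have hu := tendsto_extrap_comp hβ hstep hθ ha
  have hv : Tendsto (proxSubgrad f' L β x ξ ∘ θ) atTop (𝓝 (b - f' a)) := by
    have hlim := ((((hF.continuous_gradient.tendsto a).comp hu).sub hb).add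
      ((ha'.sub hu).const_smul L)).neg
    rwa [sub_self, smul_zero, add_zero, neg_sub] at hlim
  obtain ⟨hval, hsub⟩ := ConvexSubgradAtE.of_tendsto hP₁.2.2.1
    (fun j => hx.eq_coe_toReal hP₁ (θ j + 1))
    (fun j => hx.convexSubgradAtE_proxSubgrad hP₁ (θ j)) ha' hv
    (tendsto_toReal_of_tendsto_iterPot hF.continuous_left hF.continuous_right hpot hθ ha ha' hb)
  exact ⟨a, b, rfl, hval, hsub,
    ConvexSubgradAt.of_tendsto hF.continuous_right (fun j => hx.2.1 (θ j)) ha hb⟩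

lemma exists_tendsto_iterPot [ProperSpace H] (hx : IsPDCAe f' P₁ P₂ L β x ξ)
    (hF : IsSmoothDC f f' P₁ P₂ L) (hβ : ∀ k, |β k| ≤ 1) (hbdd : IsBounded (range x)) :
    ∃ ζ, Tendsto (iterPot f P₁ P₂ L x ξ) atTop (𝓝 ζ) :=
  ⟨_, tendsto_atTop_ciInf (hx.antitone_iterPot hF hβ) (hx.bddBelow_range_iterPot hF hbdd)⟩

lemma tendsto_norm_sub [CompleteSpace H] (hx : IsPDCAe f' P₁ P₂ L β x ξ)
    (hF : IsSmoothDC f f' P₁ P₂ L) (hB : B < 1) (hβ : ∀ k, |β k| ≤ B)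
    (hpot : Tendsto (iterPot f P₁ P₂ L x ξ) atTop (𝓝 ζ)) :
    Tendsto (fun k => ‖x (k + 1) - x k‖) atTop (𝓝 0) :=
  let ⟨_, hc, hdec⟩ := hx.exists_iterPot_succ_add_le hF hB hβ
  tendsto_zero_of_add_sq_le hc hpot hdec

lemma summable_norm_sub [ProperSpace H] (hx : IsPDCAe f' P₁ P₂ L β x ξ)
    (hF : IsSmoothDC f f' P₁ P₂ L) (hB : B < 1) (hβ : ∀ k, |β k| ≤ B) (hbdd : IsBounded (range x))
    (hKL : IsKLFun (potTriple f P₁ P₂ L)) : Summable fun k => ‖x (k + 1) - x k‖ := by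
  have hL := hF.pos
  have hβ_one : ∀ k, |β k| ≤ 1 := fun k => (hβ k).trans hB.le
  obtain ⟨ζ, hpot⟩ := hx.exists_tendsto_iterPot hF hβ_one hbdd
  obtain ⟨K, hK, hxK⟩ := hx.exists_isCompact_iterTriple_mem hF.continuous_right hbdd
  obtain ⟨c, hc, hdec⟩ := hx.exists_iterPot_succ_add_le hF hB hβ
  refine summable_of_kl_descent hKL hK hxK hc (by positivity : 0 ≤ 4 * L + 1)
    (hx.potTriple_iterTriple hF.properClosedConvex f) hpot (fun _ => norm_nonneg _) hdec
    (fun k => hx.exists_mem_limSubdiff_norm_le hF hβ_one (k + 1)) fun q hq => ?_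
  obtain ⟨a, b, rfl, hval, hsub₁, hsub₂⟩ := hx.exists_of_mapClusterPt_iterTriple hF hβ_one hpot
    (hx.tendsto_norm_sub hF hB hβ hpot) hq
  refine ⟨?_, _, mem_limSubdiff_potTriple hL.le hF.convexOn (hF.hasGradientAt a) hval hsub₁ hsub₂⟩
  rw [potTriple_of_convexSubgradAt hval hsub₂, sub_self, inner_zero_right, norm_zero]
  congr 1
  ring

lemma isDCStationary_of_tendsto [ProperSpace H] (hx : IsPDCAe f' P₁ P₂ L β x ξ)
    (hF : IsSmoothDC f f' P₁ P₂ L) (hB : B < 1) (hβ : ∀ k, |β k| ≤ B) {a : H}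
    (ha : Tendsto x atTop (𝓝 a)) : IsDCStationary f' P₁ P₂ a := by
  have hβ_one : ∀ k, |β k| ≤ 1 := fun k => (hβ k).trans hB.le
  have hbdd : IsBounded (range x) := isBounded_range_of_tendsto x ha
  obtain ⟨ζ, hpot⟩ := hx.exists_tendsto_iterPot hF hβ_one hbdd
  obtain ⟨K, hK, hxK⟩ := hx.exists_isCompact_iterTriple_mem hF.continuous_right hbdd
  obtain ⟨q, -, hq⟩ := hK.exists_mapClusterPt_of_frequently (l := atTop) (.of_forall hxK)
  obtain ⟨b, v, rfl, -, hsub₁, hsub₂⟩ := hx.exists_of_mapClusterPt_iterTriple hF hβ_one hpot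
    (hx.tendsto_norm_sub hF hB hβ hpot) hq
  have hfst : MapClusterPt b atTop fun k => x (k + 1) :=
    hq.continuousAt_comp (WithLp.continuous_fst 2 _ _).continuousAt
  obtain rfl : b = a := eq_of_nhds_neBot
    (ClusterPt.mono hfst ((tendsto_add_atTop_iff_nat 1).2 ha))
  exact ⟨_, v, hsub₁, hsub₂, by abel⟩

end IsPDCAe

theorem pDCAe_global_convergence_general [ProperSpace H] {f : H → ℝ} {f' : H → H} {P₁ : H → EReal}
    {P₂ : H → ℝ} {L B : ℝ} {β : ℕ → ℝ} {x ξ : ℕ → H} (hF : IsSmoothDC f f' P₁ P₂ L) (hB : B < 1)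
    (hβ : ∀ k, |β k| ≤ B) (hx : IsPDCAe f' P₁ P₂ L β x ξ) (hbdd : IsBounded (range x))
    (hKL : IsKLFun (potTriple f P₁ P₂ L)) :
    ∃ xbar, IsDCStationary f' P₁ P₂ xbar ∧ Tendsto x atTop (𝓝 xbar) ∧
      Summable fun k => ‖x (k + 1) - x k‖ := by
  have hsum := hx.summable_norm_sub hF hB hβ hbdd hKL
  have hcauchy : CauchySeq x := cauchySeq_of_summable_dist <|
    hsum.congr fun k => by rw [dist_comm, dist_eq_norm]
  obtain ⟨xbar, hlim⟩ := cauchySeq_tendsto_of_complete hcauchy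
  exact ⟨xbar, hx.isDCStationary_of_tendsto hF hB hβ hlim, hlim, hsum⟩

/-- Theorem 2: if `F` is level-bounded and the potential `E` is a KL function, the whole
sequence generated by pDCAe converges to a stationary point of `F`, and the successive
differences are summable in norm. -/
theorem pDCAe_global_convergence
    {n : ℕ} (f : Eucl n → ℝ) (f' : Eucl n → Eucl n) (P₁ : Eucl n → EReal)
    (P₂ : Eucl n → ℝ) (L : ℝ) (β : ℕ → ℝ) (x ξ : ℕ → Eucl n)
    (hL : 0 < L)
    (hfconv : ConvexOn ℝ Set.univ f)
    (hfgrad : ∀ y, HasGradientAt f (f' y) y)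
    (hflip : ∀ y z, ‖f' y - f' z‖ ≤ L * ‖y - z‖)
    (hP₁ : ProperClosedConvexE P₁)
    (hP₂cont : Continuous P₂)
    (hP₂conv : ConvexOn ℝ Set.univ P₂)
    (hβ : ∀ k, β k ∈ Set.Ico (0:ℝ) 1)
    (hβsup : ∃ B < (1:ℝ), ∀ k, β k ≤ B)
    (hlevel : ∀ γ : ℝ, IsBounded {y : Eucl n |
      ((f y : ℝ) : EReal) + P₁ y - ((P₂ y : ℝ) : EReal) ≤ (γ : EReal)})
    (hseq : IsPDCAe f' P₁ P₂ L β x ξ)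
    (hKL : IsKLFun (potE3 f P₁ P₂ L))
    : ∃ xbar : Eucl n,
      (∃ v₁ v₂ : Eucl n, ConvexSubgradAtE P₁ v₁ xbar ∧ ConvexSubgradAt P₂ v₂ xbar ∧
        f' xbar + v₁ - v₂ = 0) ∧
      Tendsto x atTop (𝓝 xbar) ∧
      Summable (fun k : ℕ => ‖x (k + 1) - x k‖) := by
  have hF : IsSmoothDC f f' P₁ P₂ L := ⟨hL, hfconv, hfgrad, hflip, hP₁, hP₂cont⟩
  obtain ⟨B, hB, hβB⟩ := hβsup
  have hβ_abs : ∀ k, |β k| = β k := fun k => abs_of_nonneg (hβ k).1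
  exact pDCAe_global_convergence_general hF hB (fun k => (hβ_abs k).trans_le (hβB k)) hseq
    (hseq.isBounded_range hF (fun k => (hβ_abs k).trans_le (hβ k).2.le) hlevel) hKL
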